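/- For all p > 1 and q > 1 with 1/p + 1/q > 1, there exists a constant C_{p,q} > 0, depending only on p and q, such that: for every a < b and all functions f, g : [a;b] → ℝ with no common points of discontinuity, with f of finite p-variation and g of finite q-variation on [a;b], one has |∫_a^b f dg − f(a)·(g(b) − g(a))| ≤ C_{p,q} · ‖f‖_{p-var,[a;b]} · ‖g‖_{q-var,[a;b]}^{q − q/p} · ‖g‖_{osc,[a;b]}^{1 + q/p − q}, where ∫_a^b f dg denotes the Riemann–Stieltjes integral (which exists under these hypotheses). -/

import Mathlib

open Filter Set

/-- Truncated variation of `f` on `[a;b]` with truncation parameter `δ`. -/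
noncomputable def truncVar (f : ℝ → ℝ) (δ a b : ℝ) : ENNReal :=
  ⨆ (n : ℕ) (t : Fin (n + 1) → ℝ) (_ : StrictMono t)
    (_ : ∀ i, t i ∈ Set.Icc a b),
    ∑ i : Fin n, ENNReal.ofReal (|f (t i.succ) - f (t i.castSucc)| - δ)

/-- p-variation of `f` on `[a;b]`. -/
noncomputable def pVar (f : ℝ → ℝ) (p a b : ℝ) : ENNReal :=
  ⨆ (n : ℕ) (t : Fin (n + 1) → ℝ) (_ : StrictMono t)
    (_ : ∀ i, t i ∈ Set.Icc a b),
    ∑ i : Fin n, ENNReal.ofReal (|f (t i.succ) - f (t i.castSucc)| ^ p)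

/-- The p-variation norm `(V^p(f,[a;b]))^{1/p}`. -/
noncomputable def pVarNorm (f : ℝ → ℝ) (p a b : ℝ) : ℝ :=
  (pVar f p a b).toReal ^ (1 / p)

/-- Oscillation norm `sup_{a ≤ s < t ≤ b} |f t - f s|`. -/
noncomputable def oscNorm (f : ℝ → ℝ) (a b : ℝ) : ℝ :=
  sSup {x | ∃ s ∈ Set.Icc a b, ∃ t ∈ Set.Icc a b, s < t ∧ x = |f t - f s|}

/-- Sup norm `sup_{a ≤ t ≤ b} |f t|`. -/
noncomputable def supNorm (f : ℝ → ℝ) (a b : ℝ) : ℝ :=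
  sSup {x | ∃ t ∈ Set.Icc a b, x = |f t|}

/-- `I` is the Riemann–Stieltjes integral `∫_a^b f dg`. -/
def RSIntegral (f g : ℝ → ℝ) (a b : ℝ) (I : ℝ) : Prop :=
  ∀ ε > (0 : ℝ), ∃ δ > (0 : ℝ), ∀ (n : ℕ) (t : Fin (n + 1) → ℝ) (ξ : Fin n → ℝ),
    StrictMono t → t 0 = a → t (Fin.last n) = b →
    (∀ i : Fin n, t i.castSucc ≤ ξ i ∧ ξ i ≤ t i.succ) →
    (∀ i : Fin n, t i.succ - t i.castSucc < δ) →
    |∑ i : Fin n, f (ξ i) * (g (t i.succ) - g (t i.castSucc)) - I| < ε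

/-- `f` is regulated on `[a;b]`: all the relevant one-sided limits exist and are finite. -/
def Regulated (f : ℝ → ℝ) (a b : ℝ) : Prop :=
  (∃ L : ℝ, Tendsto f (nhdsWithin a (Set.Ioi a)) (nhds L)) ∧
  (∃ L : ℝ, Tendsto f (nhdsWithin b (Set.Iio b)) (nhds L)) ∧
  ∀ x ∈ Set.Ioo a b,
    (∃ L : ℝ, Tendsto f (nhdsWithin x (Set.Iio x)) (nhds L)) ∧
    (∃ L : ℝ, Tendsto f (nhdsWithin x (Set.Ioi x)) (nhds L))

/-- `f` and `g` have no common points of discontinuity on `[a;b]`. -/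
def NoCommonDiscont (f g : ℝ → ℝ) (a b : ℝ) : Prop :=
  ∀ x ∈ Set.Icc a b,
    ContinuousWithinAt f (Set.Icc a b) x ∨ ContinuousWithinAt g (Set.Icc a b) x

/-!
Write `x i` and `y i` for the values of `f` and `g` along two nondecreasing sequences. Deleting
`x (k + 1)` and `y k` from `∑ (x (i + 1) - x 0) * (y (i + 1) - y i)` changes the sum by exactly
`(x (k + 1) - x k) * (y (k + 1) - y k)`. By the pigeonhole principle some `k` makes the increment of
`f` at most a constant times `n ^ (-1 / p)` and simultaneously that of `g` at most a constant times
`n ^ (-1 / q)`, where `n` is the number of terms before the deletion. The increment of `g` is also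
at most its oscillation, so deleting all terms one by one costs at most
`∑ min (A * n ^ (-1 / p)) (B * n ^ (-(1 / p + 1 / q)))`. Splitting this sum where the two power
functions cross gives a product of powers of `A` and `B`: these are the exponents `1 + q / p - q`
and `q - q / p`. Young's classical argument uses the second power only.

On a short interval the absence of common discontinuities bounds every product of an increment of
`f` and one of `g` by a small `η`. Using `η` in place of the first power bounds the sum by a small
multiple of `V^p(f) + V^q(g)`, which is superadditive in the interval. Hence refining a fine
partition hardly changes its Riemann–Stieltjes sum, and the sums are Cauchy as the mesh tends to
`0`.
-/

/-! ### Deleting points from Young sums -/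

/-- The increasing enumeration of `ℕ \ {k}`. -/
def skip (k i : ℕ) : ℕ := if i < k then i else i + 1

lemma skip_of_lt {k i : ℕ} (h : i < k) : skip k i = i := if_pos h

lemma skip_of_le {k i : ℕ} (h : k ≤ i) : skip k i = i + 1 := if_neg h.not_gt

lemma skip_strictMono (k : ℕ) : StrictMono (skip k) := by
  intro i j hij
  grind [skip]

/-- The Riemann–Stieltjes sum of `x - x 0` against `y`, tagged at right endpoints. -/
def youngSum {R : Type*} [NonUnitalNonAssocRing R] (x y : ℕ → R) (n : ℕ) : R :=
  ∑ i ∈ Finset.range n, (x (i + 1) - x 0) * (y (i + 1) - y i)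

lemma youngSum_succ_eq_youngSum_skip_add {R : Type*} [NonUnitalNonAssocRing R] (x y : ℕ → R)
    {k n : ℕ} (hkn : k ≤ n) :
    youngSum x y (n + 1) = youngSum (x ∘ skip (k + 1)) (y ∘ skip k) n +
      (x (k + 1) - x k) * (y (k + 1) - y k) := by
  induction n, hkn using Nat.le_induction with
  | base =>
    cases k with
    | zero => simp [youngSum]
    | succ j =>
      have initial_eq : youngSum (x ∘ skip (j + 2)) (y ∘ skip (j + 1)) j = youngSum x y j := by
        refine Finset.sum_congr rfl fun i hi ↦ ?_
        have := Finset.mem_range.1 hi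
        grind [skip]
      rw [youngSum, Finset.sum_range_succ, Finset.sum_range_succ, ← youngSum, ← initial_eq,
        youngSum, youngSum, Finset.sum_range_succ (n := j)]
      simp only [Function.comp_apply, skip_of_lt (Nat.zero_lt_succ _),
        skip_of_lt (Nat.lt_succ_self _), skip_of_le le_rfl]
      noncomm_ring
  | succ n hkn ih =>
    rw [youngSum, Finset.sum_range_succ, ← youngSum, ih, youngSum, youngSum,
      Finset.sum_range_succ (n := n)]
    simp only [Function.comp_apply, skip_of_lt (Nat.zero_lt_succ _), skip_of_le hkn,
      skip_of_le (Nat.succ_le_succ hkn), skip_of_le (hkn.trans n.le_succ)]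
    abel

lemma norm_youngSum_le_sum {R : Type*} [NonUnitalSeminormedRing R] {φ : ℕ → ℝ} (n : ℕ)
    {x y : ℕ → R}
    (hφ : ∀ n (σ τ : ℕ → ℕ), StrictMono σ → StrictMono τ → ∃ k ≤ n,
      ‖(x (σ (k + 1)) - x (σ k)) * (y (τ (k + 1)) - y (τ k))‖ ≤ φ n) :
    ‖youngSum x y n‖ ≤ ∑ m ∈ Finset.range n, φ m := by
  induction n generalizing x y with
  | zero => simp [youngSum]
  | succ n ih =>
    obtain ⟨k, hkn, hk⟩ := hφ n id id strictMono_id strictMono_id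
    rw [youngSum_succ_eq_youngSum_skip_add x y hkn, Finset.sum_range_succ]
    exact (norm_add_le _ _).trans <| add_le_add
      (ih fun m σ τ hσ hτ ↦ hφ m _ _ ((skip_strictMono _).comp hσ) ((skip_strictMono _).comp hτ)) hk

/-! ### Sums of minima of two powers -/

lemma sum_range_le_integral_Ioi_of_antitoneOn {F : ℝ → ℝ} (hanti : AntitoneOn F (Ioi 0))
    (hnonneg : ∀ u ∈ Ioi 0, 0 ≤ F u) (hint : MeasureTheory.IntegrableOn F (Ioi 0)) (n : ℕ) :
    ∑ m ∈ Finset.range n, F (m + 1) ≤ ∫ u in Ioi 0, F u := by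
  have hintv (m k : ℕ) : IntervalIntegrable F MeasureTheory.volume m k :=
    (intervalIntegrable_iff.2 (hint.mono_set fun u hu ↦
      (le_min m.cast_nonneg k.cast_nonneg).trans_lt hu.1))
  have term_le (m : ℕ) : F (m + 1) ≤ ∫ u in (m : ℝ)..(m + 1 : ℕ), F u := by
    calc F (m + 1) = ∫ _ in (m : ℝ)..(m + 1 : ℕ), F (m + 1) := by simp
      _ ≤ ∫ u in (m : ℝ)..(m + 1 : ℕ), F u := by
        refine intervalIntegral.integral_mono_on_of_le_Ioo (by simp) (by simp) (hintv _ _) ?_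
        intro u hu
        have hu0 : 0 < u := m.cast_nonneg.trans_lt hu.1
        have : u < m + 1 := by simpa using hu.2
        exact hanti hu0 (hu0.trans this) this.le
  calc ∑ m ∈ Finset.range n, F (m + 1)
      ≤ ∑ m ∈ Finset.range n, ∫ u in (m : ℝ)..(m + 1 : ℕ), F u :=
        Finset.sum_le_sum fun m _ ↦ term_le m
    _ = ∫ u in Ioc 0 (n : ℝ), F u := by
        rw [intervalIntegral.sum_integral_adjacent_intervals fun m _ ↦ hintv m (m + 1),
          Nat.cast_zero, intervalIntegral.integral_of_le n.cast_nonneg]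
    _ ≤ ∫ u in Ioi 0, F u :=
        MeasureTheory.setIntegral_mono_set hint
          (MeasureTheory.ae_restrict_of_forall_mem measurableSet_Ioi hnonneg)
          Ioc_subset_Ioi_self.eventuallyLE

open MeasureTheory in
lemma integrableOn_union_min {α : Type*} [MeasurableSpace α] {μ : Measure α} {F G : α → ℝ}
    {S T : Set α} (hS : MeasurableSet S) (hT : MeasurableSet T) (hF : Measurable F)
    (hG : Measurable G) (hF0 : ∀ u ∈ S ∪ T, 0 ≤ F u) (hG0 : ∀ u ∈ S ∪ T, 0 ≤ G u)
    (hFS : IntegrableOn F S μ) (hGT : IntegrableOn G T μ) :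
    IntegrableOn (fun u ↦ min (F u) (G u)) (S ∪ T) μ := by
  have norm_min (u : α) (hu : u ∈ S ∪ T) : ‖min (F u) (G u)‖ = min (F u) (G u) :=
    Real.norm_of_nonneg (le_min (hF0 u hu) (hG0 u hu))
  refine IntegrableOn.union ?_ ?_
  · refine hFS.mono' (hF.min hG).aestronglyMeasurable (ae_restrict_of_forall_mem hS fun u hu ↦ ?_)
    exact (norm_min u (.inl hu)).trans_le (min_le_left _ _)
  · refine hGT.mono' (hF.min hG).aestronglyMeasurable (ae_restrict_of_forall_mem hT fun u hu ↦ ?_)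
    exact (norm_min u (.inr hu)).trans_le (min_le_right _ _)

open MeasureTheory in
lemma setIntegral_union_min_le {α : Type*} [MeasurableSpace α] {μ : Measure α} {F G : α → ℝ}
    {S T : Set α} (hS : MeasurableSet S) (hT : MeasurableSet T) (hST : Disjoint S T)
    (hmin : IntegrableOn (fun u ↦ min (F u) (G u)) (S ∪ T) μ)
    (hFS : IntegrableOn F S μ) (hGT : IntegrableOn G T μ) :
    ∫ u in S ∪ T, min (F u) (G u) ∂μ ≤ ∫ u in S, F u ∂μ + ∫ u in T, G u ∂μ := by
  have hminS := hmin.mono_set subset_union_left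
  have hminT := hmin.mono_set subset_union_right
  rw [setIntegral_union hST hT hminS hminT]
  exact add_le_add (setIntegral_mono_on hminS hFS hS fun _ _ ↦ min_le_left _ _)
    (setIntegral_mono_on hminT hGT hT fun _ _ ↦ min_le_right _ _)

lemma sum_min_rpow_le_add {s r A B x : ℝ} (hs0 : 0 ≤ s) (hs : s < 1) (hr : 1 < r) (hA : 0 ≤ A)
    (hB : 0 ≤ B) (hx : 0 < x) (n : ℕ) :
    ∑ m ∈ Finset.range n, min (A * ((m : ℝ) + 1) ^ (-s)) (B * ((m : ℝ) + 1) ^ (-r)) ≤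
      A * (x ^ (1 - s) / (1 - s)) + B * (x ^ (1 - r) / (r - 1)) := by
  have nonneg {C e : ℝ} (hC : 0 ≤ C) : ∀ u ∈ Ioi (0 : ℝ), 0 ≤ C * u ^ e :=
    fun u hu ↦ mul_nonneg hC (Real.rpow_nonneg hu.le e)
  have antitone {C e : ℝ} (hC : 0 ≤ C) (he : 0 ≤ e) :
      AntitoneOn (fun u : ℝ ↦ C * u ^ (-e)) (Ioi 0) := fun u hu v hv huv ↦
    mul_le_mul_of_nonneg_left
      (Real.antitoneOn_rpow_Ioi_of_exponent_nonpos (neg_nonpos.2 he) hu hv huv) hC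
  have head : MeasureTheory.IntegrableOn (fun u : ℝ ↦ A * u ^ (-s)) (Ioc 0 x) :=
    ((intervalIntegrable_iff_integrableOn_Ioc_of_le hx.le).1
      (intervalIntegral.intervalIntegrable_rpow' (neg_lt_neg hs))).const_mul A
  have tail : MeasureTheory.IntegrableOn (fun u : ℝ ↦ B * u ^ (-r)) (Ioi x) :=
    (integrableOn_Ioi_rpow_of_lt (neg_lt_neg hr) hx).const_mul B
  have union : Ioc 0 x ∪ Ioi x = Ioi 0 := Ioc_union_Ioi_eq_Ioi hx.le
  have integrable := integrableOn_union_min measurableSet_Ioc measurableSet_Ioi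
    (by fun_prop) (by fun_prop) (union ▸ nonneg hA) (union ▸ nonneg hB) head tail
  have integral_le := setIntegral_union_min_le measurableSet_Ioc measurableSet_Ioi
    (Ioc_disjoint_Ioi le_rfl) integrable head tail
  rw [union] at integrable integral_le
  calc _ ≤ ∫ u in Ioi 0, min (A * u ^ (-s)) (B * u ^ (-r)) :=
        sum_range_le_integral_Ioi_of_antitoneOn
          ((antitone hA hs0).min (antitone hB (zero_le_one.trans hr.le)))
          (fun u hu ↦ le_min (nonneg hA u hu) (nonneg hB u hu)) integrable n
    _ ≤ (∫ u in Ioc 0 x, A * u ^ (-s)) + ∫ u in Ioi x, B * u ^ (-r) := integral_le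
    _ = A * (x ^ (1 - s) / (1 - s)) + B * (x ^ (1 - r) / (r - 1)) := by
        rw [MeasureTheory.integral_const_mul, MeasureTheory.integral_const_mul,
          ← intervalIntegral.integral_of_le hx.le, integral_rpow (.inl (neg_lt_neg hs)),
          integral_Ioi_rpow_of_lt (neg_lt_neg hr) hx, neg_add_eq_sub, neg_add_eq_sub,
          Real.zero_rpow (sub_pos.2 hs).ne', sub_zero, neg_div, ← div_neg, neg_sub]

lemma sum_min_rpow_le {s r A B : ℝ} (hs0 : 0 ≤ s) (hs : s < 1) (hr : 1 < r) (hA : 0 ≤ A)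
    (hB : 0 ≤ B) (n : ℕ) :
    ∑ m ∈ Finset.range n, min (A * ((m : ℝ) + 1) ^ (-s)) (B * ((m : ℝ) + 1) ^ (-r)) ≤
      (1 / (1 - s) + 1 / (r - 1)) * (A ^ ((r - 1) / (r - s)) * B ^ ((1 - s) / (r - s))) := by
  have h1s : 0 < 1 - s := sub_pos.2 hs
  have hr1 : 0 < r - 1 := sub_pos.2 hr
  have hrs : 0 < r - s := sub_pos.2 (hs.trans hr)
  rcases hA.eq_or_lt with rfl | hA
  · rw [Real.zero_rpow (by positivity), zero_mul, mul_zero]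
    exact Finset.sum_nonpos fun m _ ↦ (min_le_left _ _).trans (zero_mul _).le
  rcases hB.eq_or_lt with rfl | hB
  · rw [Real.zero_rpow (by positivity), mul_zero, mul_zero]
    exact Finset.sum_nonpos fun m _ ↦ (min_le_right _ _).trans (zero_mul _).le
  -- The two power functions `A * u ^ (-s)` and `B * u ^ (-r)` cross at `x`.
  set x : ℝ := (B / A) ^ (1 / (r - s)) with hx
  have hx0 : 0 < x := by positivity
  have rpow_sub_eq : x ^ (r - s) = B / A := by
    rw [hx, ← Real.rpow_mul (by positivity), one_div_mul_cancel hrs.ne', Real.rpow_one]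
  have head_eq : A * x ^ (1 - s) = A ^ ((r - 1) / (r - s)) * B ^ ((1 - s) / (r - s)) := by
    rw [hx, ← Real.rpow_mul (by positivity), one_div_mul_eq_div, Real.div_rpow hB.le hA.le,
      show (r - 1) / (r - s) = 1 - (1 - s) / (r - s) by field_simp; ring,
      Real.rpow_sub hA, Real.rpow_one]
    ring
  have tail_eq : B * x ^ (1 - r) = A * x ^ (1 - s) := by
    rw [show 1 - s = (r - s) + (1 - r) by ring, Real.rpow_add hx0, rpow_sub_eq]
    field_simp
  calc _ ≤ A * (x ^ (1 - s) / (1 - s)) + B * (x ^ (1 - r) / (r - 1)) :=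
        sum_min_rpow_le_add hs0 hs hr hA.le hB.le hx0 n
    _ = 1 / (1 - s) * (A * x ^ (1 - s)) + 1 / (r - 1) * (B * x ^ (1 - r)) := by ring
    _ = _ := by rw [tail_eq, head_eq, add_mul]

/-! ### Variation along nondecreasing sequences -/

lemma exists_strictMono_fin_sum_eq {α M : Type*} [PartialOrder α] [AddCommMonoid M]
    {F : α → α → M} (hF : ∀ x, F x x = 0) {u : ℕ → α} (hu : Monotone u) (n : ℕ) :
    ∃ (m : ℕ) (t : Fin (m + 1) → α), StrictMono t ∧ t 0 = u 0 ∧ (∀ i, t i ∈ range u) ∧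
      ∑ i : Fin m, F (t i.castSucc) (t i.succ) = ∑ i ∈ Finset.range n, F (u i) (u (i + 1)) := by
  induction n generalizing u with
  | zero =>
    exact ⟨0, fun _ ↦ u 0, Fin.strictMono_iff_lt_succ.2 nofun, rfl, fun _ ↦ mem_range_self 0, rfl⟩
  | succ n ih =>
    obtain ⟨m, t, ht, ht0, htu, hsum⟩ := ih (u := fun i ↦ u (i + 1))
      (hu.comp fun _ _ ↦ Nat.succ_le_succ)
    have htu (i) : t i ∈ range u := range_comp_subset_range (· + 1) u (htu i)
    rw [Finset.sum_range_succ', ← hsum]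
    rcases (hu zero_le_one).eq_or_lt with h01 | h01
    · exact ⟨m, t, ht, ht0.trans h01.symm, htu, by rw [zero_add, ← h01, hF, add_zero]⟩
    · refine ⟨m + 1, Matrix.vecCons (u 0) t, strictMono_vecCons.2 ⟨ht0 ▸ h01, ht⟩, rfl,
        Fin.cases (mem_range_self 0) htu, ?_⟩
      rw [Fin.sum_univ_succ, add_comm]
      simp [ht0]

lemma clamp_val {n : ℕ} (i : Fin n) : Fin.clamp i n = i.castSucc := by
  ext; simp [i.is_le']

lemma clamp_val_add_one {n : ℕ} (i : Fin n) : Fin.clamp (i + 1) n = i.succ := by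
  ext; simp

lemma pVar_eq_iSup {p : ℝ} (hp : p ≠ 0) (f : ℝ → ℝ) (a b : ℝ) :
    pVar f p a b = ⨆ w : ℕ × (ℕ →o Icc a b),
      ∑ i ∈ Finset.range w.1, ENNReal.ofReal (|f (w.2 (i + 1)) - f (w.2 i)| ^ p) := by
  refine le_antisymm ?_ (iSup_le fun ⟨n, u⟩ ↦ ?_)
  · refine iSup_le fun n ↦ iSup_le fun t ↦ iSup_le fun ht ↦ iSup_le fun hab ↦ ?_
    refine le_iSup_of_le ⟨n, fun i ↦ ⟨t (Fin.clamp i n), hab _⟩,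
      ht.monotone.comp Fin.clamp_monotone⟩ ?_
    rw [Finset.sum_range]
    refine (Finset.sum_congr rfl fun i _ ↦ ?_).le
    rw [← clamp_val i, ← clamp_val_add_one i]
    rfl
  · obtain ⟨m, t, ht, -, htu, hsum⟩ := exists_strictMono_fin_sum_eq
      (F := fun x y ↦ ENNReal.ofReal (|f y - f x| ^ p)) (by simp [Real.zero_rpow hp])
      ((Subtype.mono_coe _).comp u.monotone) n
    have hab (i) : t i ∈ Icc a b := by
      obtain ⟨j, hj⟩ := htu i
      exact hj ▸ (u j).2
    exact hsum.symm.trans_le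
      (le_iSup_of_le m (le_iSup_of_le t (le_iSup_of_le ht (le_iSup_of_le hab le_rfl))))

lemma pVar_le_pVar_of_subset (f : ℝ → ℝ) (p : ℝ) {a b c d : ℝ} (h : Icc c d ⊆ Icc a b) :
    pVar f p c d ≤ pVar f p a b :=
  iSup_mono fun _ ↦ iSup_mono fun _ ↦ iSup_mono fun _ ↦ iSup_const_mono fun hcd i ↦ h (hcd i)

lemma pVar_add_le {p : ℝ} (hp : p ≠ 0) (f : ℝ → ℝ) {a b c : ℝ} (hab : a ≤ b) (hbc : b ≤ c) :
    pVar f p a b + pVar f p b c ≤ pVar f p a c := by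
  have : Nonempty (ℕ →o Icc a b) := ⟨OrderHom.const ℕ ⟨a, left_mem_Icc.2 hab⟩⟩
  have : Nonempty (ℕ →o Icc b c) := ⟨OrderHom.const ℕ ⟨b, left_mem_Icc.2 hbc⟩⟩
  simp only [pVar_eq_iSup hp]
  refine ENNReal.iSup_add_iSup_le fun ⟨n, u⟩ ⟨m, v⟩ ↦ ?_
  let w : ℕ →o Icc a c :=
    { toFun i := if i ≤ n then inclusion (Icc_subset_Icc_right hbc) (u i)
        else inclusion (Icc_subset_Icc_left hab) (v (i - (n + 1)))
      monotone' i j hij := by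
        dsimp only
        split_ifs
        · exact u.monotone hij
        · exact (u i).2.2.trans (v _).2.1
        · omega
        · exact v.monotone (by omega) }
  have w_left {i : ℕ} (hi : i ≤ n) : (w i : ℝ) = u i := congrArg Subtype.val (if_pos hi)
  have w_right (i : ℕ) : (w (n + 1 + i) : ℝ) = v i := by
    refine (congrArg Subtype.val (if_neg (by omega))).trans ?_
    rw [coe_inclusion, Nat.add_sub_cancel_left]
  refine le_iSup_of_le (n + 1 + m, w) ?_
  dsimp only
  rw [Finset.sum_range_add, Finset.sum_range_succ]
  refine add_le_add (le_add_right (Finset.sum_le_sum fun i hi ↦ ?_))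
    (Finset.sum_le_sum fun i _ ↦ ?_)
  · have hi := Finset.mem_range.1 hi
    rw [w_left hi.le, w_left hi]
  · rw [w_right, add_assoc, w_right]

lemma sum_pVar_le {p : ℝ} (hp : p ≠ 0) (f : ℝ → ℝ) {t : ℕ → ℝ} (ht : Monotone t) (n : ℕ) :
    ∑ i ∈ Finset.range n, pVar f p (t i) (t (i + 1)) ≤ pVar f p (t 0) (t n) := by
  induction n with
  | zero => simp
  | succ n ih =>
    rw [Finset.sum_range_succ]
    exact (add_le_add_left ih _).trans (pVar_add_le hp f (ht n.zero_le) (ht n.le_succ))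

lemma sum_toReal_pVar_le {p : ℝ} (hp : p ≠ 0) {f : ℝ → ℝ} {t : ℕ → ℝ} (ht : Monotone t) {n : ℕ}
    (hf : pVar f p (t 0) (t n) ≠ ⊤) :
    ∑ i ∈ Finset.range n, (pVar f p (t i) (t (i + 1))).toReal ≤
      (pVar f p (t 0) (t n)).toReal := by
  have hsum := sum_pVar_le hp f ht n
  rw [← ENNReal.toReal_sum (ENNReal.sum_ne_top.1 (ne_top_of_le_ne_top hf hsum))]
  exact ENNReal.toReal_mono hf hsum

lemma sum_rpow_le_toReal_pVar {p : ℝ} (hp : p ≠ 0) {f : ℝ → ℝ} {a b : ℝ} (hf : pVar f p a b ≠ ⊤)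
    (u : ℕ →o Icc a b) (n : ℕ) :
    ∑ i ∈ Finset.range n, |f (u (i + 1)) - f (u i)| ^ p ≤ (pVar f p a b).toReal := by
  rw [← ENNReal.ofReal_le_iff_le_toReal hf, ENNReal.ofReal_sum_of_nonneg fun i _ ↦ by positivity,
    pVar_eq_iSup hp]
  exact le_iSup_of_le (n, u) le_rfl

lemma abs_sub_le_pVarNorm {p : ℝ} (hp : 0 < p) {f : ℝ → ℝ} {a b : ℝ} (hf : pVar f p a b ≠ ⊤)
    {s t : ℝ} (hs : s ∈ Icc a b) (ht : t ∈ Icc a b) : |f t - f s| ≤ pVarNorm f p a b := by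
  wlog hst : s ≤ t generalizing s t
  · exact abs_sub_comm (f s) (f t) ▸ this ht hs (le_of_not_ge hst)
  let u : ℕ →o Icc a b :=
    { toFun i := i.casesOn ⟨s, hs⟩ fun _ ↦ ⟨t, ht⟩
      monotone' := monotone_nat_of_le_succ (Nat.rec hst fun _ _ ↦ le_rfl) }
  have := sum_rpow_le_toReal_pVar hp.ne' hf u 1
  rw [Finset.sum_range_one] at this
  rw [pVarNorm, one_div]
  exact (Real.le_rpow_inv_iff_of_pos (abs_nonneg _) ENNReal.toReal_nonneg hp).2 this

lemma oscNorm_nonneg (f : ℝ → ℝ) (a b : ℝ) : 0 ≤ oscNorm f a b :=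
  Real.sSup_nonneg (by rintro _ ⟨s, -, t, -, -, rfl⟩; exact abs_nonneg _)

lemma abs_sub_le_oscNorm {p : ℝ} (hp : 0 < p) {f : ℝ → ℝ} {a b : ℝ} (hf : pVar f p a b ≠ ⊤)
    {s t : ℝ} (hs : s ∈ Icc a b) (ht : t ∈ Icc a b) : |f t - f s| ≤ oscNorm f a b := by
  wlog hst : s ≤ t generalizing s t
  · exact abs_sub_comm (f s) (f t) ▸ this ht hs (le_of_not_ge hst)
  rcases hst.eq_or_lt with rfl | hst
  · simpa using oscNorm_nonneg f a b
  refine le_csSup ⟨pVarNorm f p a b, ?_⟩ ⟨s, hs, t, ht, hst, rfl⟩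
  rintro _ ⟨s, hs, t, ht, -, rfl⟩
  exact abs_sub_le_pVarNorm hp hf hs ht

/-! ### Bounds on Young sums -/

lemma exists_le_two_mul_div_card {ι : Type*} {s : Finset ι} (hs : s.Nonempty) {u v : ι → ℝ}
    (hu : ∀ i ∈ s, 0 ≤ u i) (hv : ∀ i ∈ s, 0 ≤ v i) :
    ∃ k ∈ s, u k ≤ 2 * (∑ i ∈ s, u i) / s.card ∧ v k ≤ 2 * (∑ i ∈ s, v i) / s.card := by
  have hcard : (0 : ℝ) < s.card := Nat.cast_pos.2 hs.card_pos
  have normalized_le : ∑ i ∈ s, (u i / ∑ j ∈ s, u j + v i / ∑ j ∈ s, v j) ≤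
      ∑ _i ∈ s, 2 / (s.card : ℝ) := by
    rw [Finset.sum_add_distrib, ← Finset.sum_div, ← Finset.sum_div, Finset.sum_const, nsmul_eq_mul,
      mul_div_cancel₀ _ hcard.ne', ← one_add_one_eq_two]
    exact add_le_add (div_self_le_one _) (div_self_le_one _)
  have le_of_div_le {w : ι → ℝ} (hw : ∀ i ∈ s, 0 ≤ w i) {k : ι} (hk : k ∈ s)
      (h : w k / ∑ i ∈ s, w i ≤ 2 / s.card) : w k ≤ 2 * (∑ i ∈ s, w i) / s.card := by
    rcases (Finset.sum_nonneg hw).eq_or_lt with hw0 | hw0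
    · simpa [← hw0] using Finset.single_le_sum hw hk
    · rwa [div_le_iff₀ hw0, div_mul_eq_mul_div] at h
  obtain ⟨k, hk, hle⟩ := Finset.exists_le_of_sum_le hs normalized_le
  have hu' := div_nonneg (hu k hk) (Finset.sum_nonneg hu)
  have hv' := div_nonneg (hv k hk) (Finset.sum_nonneg hv)
  exact ⟨k, hk, le_of_div_le hu hk (by linarith), le_of_div_le hv hk (by linarith)⟩

lemma le_rpow_mul_rpow_neg_of_rpow_le_div {p x V N : ℝ} (hp : 0 < p) (hx : 0 ≤ x) (hV : 0 ≤ V)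
    (hN : 0 ≤ N) (h : x ^ p ≤ V / N) : x ≤ V ^ (1 / p) * N ^ (-(1 / p)) := by
  rw [Real.rpow_neg hN, ← div_eq_mul_inv, ← Real.div_rpow hV hN, one_div]
  exact (Real.le_rpow_inv_iff_of_pos hx (div_nonneg hV hN) hp).2 h

lemma exists_increments_le {p q : ℝ} (hp : 0 < p) (hq : 0 < q) {a b : ℝ} {f g : ℝ → ℝ}
    (hf : pVar f p a b ≠ ⊤) (hg : pVar g q a b ≠ ⊤) (ξ t : ℕ →o Icc a b) (n : ℕ) :
    ∃ k ≤ n,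
      |f (ξ (k + 1)) - f (ξ k)| ≤
        (2 * (pVar f p a b).toReal) ^ (1 / p) * ((n : ℝ) + 1) ^ (-(1 / p)) ∧
      |g (t (k + 1)) - g (t k)| ≤
        (2 * (pVar g q a b).toReal) ^ (1 / q) * ((n : ℝ) + 1) ^ (-(1 / q)) := by
  obtain ⟨k, hk, hfk, hgk⟩ := exists_le_two_mul_div_card (Finset.nonempty_range_add_one (n := n))
    (u := fun i ↦ |f (ξ (i + 1)) - f (ξ i)| ^ p) (v := fun i ↦ |g (t (i + 1)) - g (t i)| ^ q)
    (fun i _ ↦ by positivity) (fun i _ ↦ by positivity)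
  have hV : 0 ≤ (pVar f p a b).toReal := ENNReal.toReal_nonneg
  have hW : 0 ≤ (pVar g q a b).toReal := ENNReal.toReal_nonneg
  rw [Finset.card_range, Nat.cast_succ] at hfk hgk
  refine ⟨k, Finset.mem_range_succ_iff.1 hk,
    le_rpow_mul_rpow_neg_of_rpow_le_div hp (abs_nonneg _) (by positivity) (by positivity)
      (hfk.trans ?_),
    le_rpow_mul_rpow_neg_of_rpow_le_div hq (abs_nonneg _) (by positivity) (by positivity)
      (hgk.trans ?_)⟩
  · gcongr
    exact sum_rpow_le_toReal_pVar hp.ne' hf ξ (n + 1)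
  · gcongr
    exact sum_rpow_le_toReal_pVar hq.ne' hg t (n + 1)

/-- `K` bounds all sums `∑ i < n, (f (ξ (i + 1)) - f (ξ 0)) * (g (t (i + 1)) - g (t i))` over
nondecreasing sequences `ξ` and `t` in `[a;b]`. The two sequences need not interlace, which makes
the class of sums stable under passing to subsequences of `ξ` and `t` independently. -/
def YoungBound (f g : ℝ → ℝ) (a b K : ℝ) : Prop :=
  ∀ (n : ℕ) (ξ t : ℕ →o Icc a b), |youngSum (fun i ↦ f (ξ i)) (fun i ↦ g (t i)) n| ≤ K

lemma youngBound_of_exists_le {f g : ℝ → ℝ} {a b s r A B : ℝ} (hs0 : 0 ≤ s) (hs : s < 1)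
    (hr : 1 < r) (hA : 0 ≤ A) (hB : 0 ≤ B)
    (h : ∀ n (ξ t : ℕ →o Icc a b), ∃ k ≤ n,
      |(f (ξ (k + 1)) - f (ξ k)) * (g (t (k + 1)) - g (t k))| ≤
        min (A * ((n : ℝ) + 1) ^ (-s)) (B * ((n : ℝ) + 1) ^ (-r))) :
    YoungBound f g a b
      ((1 / (1 - s) + 1 / (r - 1)) * (A ^ ((r - 1) / (r - s)) * B ^ ((1 - s) / (r - s)))) := by
  intro n ξ t
  rw [← Real.norm_eq_abs]
  refine (norm_youngSum_le_sum n fun m σ τ hσ hτ ↦ ?_).trans (sum_min_rpow_le hs0 hs hr hA hB n)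
  exact h m (ξ.comp ⟨σ, hσ.monotone⟩) (t.comp ⟨τ, hτ.monotone⟩)

lemma abs_mul_le_of_abs_le_rpow {p q x y V W n : ℝ} (hV : 0 ≤ V) (hn : 0 ≤ n)
    (hx : |x| ≤ V ^ (1 / p) * (n + 1) ^ (-(1 / p)))
    (hy : |y| ≤ W ^ (1 / q) * (n + 1) ^ (-(1 / q))) :
    |x * y| ≤ V ^ (1 / p) * W ^ (1 / q) * (n + 1) ^ (-(1 / p + 1 / q)) := by
  rw [abs_mul, neg_add, Real.rpow_add (by positivity), mul_mul_mul_comm]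
  gcongr

lemma mul_rpow_mul_mul_rpow_of_add_eq_one {α β x y z : ℝ} (h : α + β = 1) (hx : 0 ≤ x)
    (hy : 0 ≤ y) (hz : 0 ≤ z) : (x * y) ^ α * (x * z) ^ β = x * z ^ β * y ^ α := by
  rw [Real.mul_rpow hx hy, Real.mul_rpow hx hz, mul_mul_mul_comm,
    ← Real.rpow_add' hx (h ▸ one_ne_zero), h, Real.rpow_one, mul_comm (y ^ α), mul_assoc]

lemma two_mul_rpow_mul_two_mul_rpow_rpow {p q V W : ℝ} (hq : q ≠ 0) (hV : 0 ≤ V) (hW : 0 ≤ W) :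
    (2 * V) ^ (1 / p) * ((2 * W) ^ (1 / q)) ^ (q - q / p) =
      2 * V ^ (1 / p) * (W ^ (1 / q)) ^ (q - q / p) := by
  have two_rpow : (2 : ℝ) ^ (1 / p) * (2 ^ (1 / q)) ^ (q - q / p) = 2 := by
    rw [← Real.rpow_mul zero_le_two, ← Real.rpow_add zero_lt_two,
      show 1 / p + 1 / q * (q - q / p) = 1 by field_simp; ring, Real.rpow_one]
  rw [Real.mul_rpow zero_le_two hV, Real.mul_rpow zero_le_two hW,
    Real.mul_rpow (by positivity) (by positivity), mul_mul_mul_comm, two_rpow, mul_assoc]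

lemma youngBound_of_pVar {p q : ℝ} (hp : 1 < p) (hq : 0 < q) (hpq : 1 < 1 / p + 1 / q) {a b : ℝ}
    {f g : ℝ → ℝ} (hf : pVar f p a b ≠ ⊤) (hg : pVar g q a b ≠ ⊤) :
    YoungBound f g a b (2 * (1 / (1 - 1 / p) + 1 / (1 / p + 1 / q - 1)) * pVarNorm f p a b *
      pVarNorm g q a b ^ (q - q / p) * oscNorm g a b ^ (1 + q / p - q)) := by
  have hp0 : 0 < p := zero_lt_one.trans hp
  have hV : 0 ≤ (pVar f p a b).toReal := ENNReal.toReal_nonneg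
  have hW : 0 ≤ (pVar g q a b).toReal := ENNReal.toReal_nonneg
  have hO : 0 ≤ oscNorm g a b := oscNorm_nonneg g a b
  convert youngBound_of_exists_le (f := f) (g := g) (a := a) (b := b) (s := 1 / p)
    (r := 1 / p + 1 / q) (A := (2 * (pVar f p a b).toReal) ^ (1 / p) * oscNorm g a b)
    (B := (2 * (pVar f p a b).toReal) ^ (1 / p) * (2 * (pVar g q a b).toReal) ^ (1 / q))
    (by positivity) ((div_lt_one hp0).2 hp) hpq (by positivity) (by positivity)
    fun n ξ t ↦ ?_ using 1
  · have exponent_osc : (1 / p + 1 / q - 1) / (1 / p + 1 / q - 1 / p) = 1 + q / p - q := by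
      rw [add_sub_cancel_left]; field_simp; ring
    have exponent_var : (1 - 1 / p) / (1 / p + 1 / q - 1 / p) = q - q / p := by
      rw [add_sub_cancel_left]; field_simp
    rw [exponent_osc, exponent_var, mul_rpow_mul_mul_rpow_of_add_eq_one (by ring) (by positivity)
      hO (by positivity), two_mul_rpow_mul_two_mul_rpow_rpow hq.ne' hV hW]
    simp only [pVarNorm]
    ring
  · obtain ⟨k, hkn, hfk, hgk⟩ := exists_increments_le hp0 hq hf hg ξ t n
    refine ⟨k, hkn, le_min ?_ (abs_mul_le_of_abs_le_rpow (by positivity) n.cast_nonneg hfk hgk)⟩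
    rw [abs_mul, mul_right_comm]
    exact mul_le_mul hfk (abs_sub_le_oscNorm hq hg (t k).2 (t (k + 1)).2) (abs_nonneg _)
      (by positivity)

lemma youngBound_of_abs_mul_le {p q : ℝ} (hp : 0 < p) (hq : 0 < q) (hpq : 1 < 1 / p + 1 / q)
    {a b η : ℝ} {f g : ℝ → ℝ} (hf : pVar f p a b ≠ ⊤) (hg : pVar g q a b ≠ ⊤) (hη : 0 ≤ η)
    (h : ∀ s ∈ Icc a b, ∀ t ∈ Icc a b, ∀ u ∈ Icc a b, ∀ v ∈ Icc a b,
      |(f t - f s) * (g v - g u)| ≤ η) :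
    YoungBound f g a b (2 * (1 + 1 / (1 / p + 1 / q - 1)) *
      η ^ ((1 / p + 1 / q - 1) / (1 / p + 1 / q)) *
        ((pVar f p a b).toReal + (pVar g q a b).toReal)) := by
  set V := (pVar f p a b).toReal
  set W := (pVar g q a b).toReal
  have hV : 0 ≤ V := ENNReal.toReal_nonneg
  have hW : 0 ≤ W := ENNReal.toReal_nonneg
  have hpq0 : 0 < 1 / p + 1 / q := zero_lt_one.trans hpq
  convert youngBound_of_exists_le (f := f) (g := g) (a := a) (b := b) (s := 0)
    (r := 1 / p + 1 / q) (A := η) (B := (2 * (V + W)) ^ (1 / p + 1 / q))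
    le_rfl one_pos hpq hη (by positivity) fun n ξ t ↦ ?_ using 1
  · simp only [sub_zero]
    rw [← Real.rpow_mul (by positivity), mul_one_div_cancel hpq0.ne', Real.rpow_one]
    ring
  · obtain ⟨k, hkn, hfk, hgk⟩ := exists_increments_le hp hq hf hg ξ t n
    refine ⟨k, hkn, le_min ?_ ?_⟩
    · simpa using h _ (ξ k).2 _ (ξ (k + 1)).2 _ (t k).2 _ (t (k + 1)).2
    · rw [Real.rpow_add' (by positivity) hpq0.ne']
      refine abs_mul_le_of_abs_le_rpow (by positivity) n.cast_nonneg (hfk.trans ?_)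
        (hgk.trans ?_) <;> gcongr <;> linarith

lemma YoungBound.abs_sum_sub_le {f g : ℝ → ℝ} {c d K : ℝ} (h : YoungBound f g c d K) {m : ℕ}
    {ξ t : ℕ → ℝ} (hξ : Monotone ξ) (ht : Monotone t) (htc : t 0 = c) (htd : t m ≤ d)
    (hξc : c ≤ ξ 0) (hξd : ∀ i < m, ξ i ≤ d) :
    |∑ i ∈ Finset.range m, f (ξ i) * (g (t (i + 1)) - g (t i)) - f c * (g (t m) - g c)| ≤ K := by
  subst htc
  have h0d : t 0 ≤ d := (ht m.zero_le).trans htd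
  have hshift : Monotone fun i ↦ projIcc (t 0) d h0d (Nat.casesOn i (t 0) ξ) :=
    (monotone_projIcc h0d).comp <| monotone_nat_of_le_succ fun
      | 0 => hξc
      | i + 1 => hξ i.le_succ
  have coe_projIcc_of_mem {x : ℝ} (hx : x ∈ Icc (t 0) d) : (projIcc (t 0) d h0d x : ℝ) = x :=
    congrArg Subtype.val (projIcc_of_mem h0d hx)
  have ht_mem {i} (hi : i ≤ m) : t i ∈ Icc (t 0) d := ⟨ht i.zero_le, (ht hi).trans htd⟩
  convert h m ⟨_, hshift⟩ ⟨_, (monotone_projIcc h0d).comp ht⟩ using 2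
  rw [← Finset.sum_range_sub (fun i ↦ g (t i)), Finset.mul_sum, ← Finset.sum_sub_distrib]
  refine Finset.sum_congr rfl fun i hi ↦ ?_
  rw [Finset.mem_range] at hi
  change _ = (f (projIcc _ d h0d (ξ i)) - f (projIcc _ d h0d (t 0))) *
    (g (projIcc _ d h0d (t (i + 1))) - g (projIcc _ d h0d (t i)))
  rw [coe_projIcc_of_mem ⟨hξc.trans (hξ i.zero_le), hξd i hi⟩, coe_projIcc_of_mem ⟨le_rfl, h0d⟩,
    coe_projIcc_of_mem (ht_mem hi), coe_projIcc_of_mem (ht_mem hi.le), sub_mul]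

/-! ### Short intervals -/

lemma exists_mem_nhdsWithin_abs_mul_le {α : Type*} [TopologicalSpace α] {f g : α → ℝ}
    {S : Set α} {x : α} (hf : ContinuousWithinAt f S x) {M : ℝ}
    (hg : ∀ u ∈ S, ∀ v ∈ S, |g v - g u| ≤ M) {η : ℝ} (hη : 0 < η) :
    ∃ U ∈ nhdsWithin x S, ∀ s ∈ U, ∀ t ∈ U, ∀ u ∈ S, ∀ v ∈ S,
      |(f t - f s) * (g v - g u)| ≤ η := by
  obtain ⟨ε, hε, hεM⟩ := exists_pos_mul_lt hη (2 * M)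
  refine ⟨f ⁻¹' Metric.ball (f x) ε, hf (Metric.ball_mem_nhds _ hε), fun s hs t ht u hu v hv ↦ ?_⟩
  have hst : |f t - f s| ≤ 2 * ε := by
    rw [← Real.dist_eq, two_mul]
    exact (dist_triangle_right _ _ (f x)).trans (add_le_add ht.le hs.le)
  calc |(f t - f s) * (g v - g u)| = |f t - f s| * |g v - g u| := abs_mul ..
    _ ≤ 2 * ε * M := mul_le_mul hst (hg u hu v hv) (abs_nonneg _) (by positivity)
    _ ≤ η := by rw [mul_right_comm]; exact hεM.le

lemma exists_forall_abs_mul_le_of_isCompact {α : Type*} [PseudoMetricSpace α] {f g : α → ℝ}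
    {S : Set α} (hS : IsCompact S)
    (h : ∀ x ∈ S, ContinuousWithinAt f S x ∨ ContinuousWithinAt g S x) {M N : ℝ}
    (hf : ∀ s ∈ S, ∀ t ∈ S, |f t - f s| ≤ M) (hg : ∀ s ∈ S, ∀ t ∈ S, |g t - g s| ≤ N)
    {η : ℝ} (hη : 0 < η) :
    ∃ δ > 0, ∀ x ∈ S, ∀ s ∈ Metric.ball x δ ∩ S, ∀ t ∈ Metric.ball x δ ∩ S,
      ∀ u ∈ Metric.ball x δ ∩ S, ∀ v ∈ Metric.ball x δ ∩ S, |(f t - f s) * (g v - g u)| ≤ η := by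
  have hloc : ∀ x ∈ S, ∃ U ∈ nhdsWithin x S, ∀ s ∈ U ∩ S, ∀ t ∈ U ∩ S, ∀ u ∈ U ∩ S, ∀ v ∈ U ∩ S,
      |(f t - f s) * (g v - g u)| ≤ η := by
    intro x hx
    rcases h x hx with hfx | hgx
    · obtain ⟨U, hU, hUη⟩ := exists_mem_nhdsWithin_abs_mul_le hfx hg hη
      exact ⟨U, hU, fun s hs t ht u hu v hv ↦ hUη s hs.1 t ht.1 u hu.2 v hv.2⟩
    · obtain ⟨U, hU, hUη⟩ := exists_mem_nhdsWithin_abs_mul_le hgx hf hη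
      exact ⟨U, hU, fun s hs t ht u hu v hv ↦
        mul_comm (g v - g u) _ ▸ hUη u hu.1 v hv.1 s hs.2 t ht.2⟩
  choose U hU hUη using hloc
  obtain ⟨δ, hδ, hδU⟩ := Metric.uniformity_basis_dist.lebesgue_number_lemma_nhdsWithin' hS hU
  refine ⟨δ, hδ, fun x hx ↦ ?_⟩
  obtain ⟨y, hy⟩ := hδU x hx
  have hball {z : α} (hz : z ∈ Metric.ball x δ ∩ S) : z ∈ U y y.2 ∩ S :=
    ⟨hy ⟨Metric.mem_ball'.1 hz.1, hz.2⟩, hz.2⟩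
  exact fun s hs t ht u hu v hv ↦
    hUη y y.2 s (hball hs) t (hball ht) u (hball hu) v (hball hv)

lemma exists_youngBound_of_noCommonDiscont {p q : ℝ} (hp : 0 < p) (hq : 0 < q)
    (hpq : 1 < 1 / p + 1 / q) {a b : ℝ} {f g : ℝ → ℝ} (h : NoCommonDiscont f g a b)
    (hf : pVar f p a b ≠ ⊤) (hg : pVar g q a b ≠ ⊤) {ε : ℝ} (hε : 0 < ε) :
    ∃ δ > 0, ∀ c d, Icc c d ⊆ Icc a b → d - c < δ →
      YoungBound f g c d (ε * ((pVar f p c d).toReal + (pVar g q c d).toReal)) := by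
  have hθ : 0 < 1 / p + 1 / q - 1 := sub_pos.2 hpq
  set C := 2 * (1 + 1 / (1 / p + 1 / q - 1))
  set e := (1 / p + 1 / q - 1) / (1 / p + 1 / q)
  have hC : 0 < C := by positivity
  have he : 0 < e := by positivity
  have hη : 0 < (ε / C) ^ e⁻¹ := by positivity
  obtain ⟨δ, hδ, hδη⟩ := exists_forall_abs_mul_le_of_isCompact isCompact_Icc h
    (fun s hs t ht ↦ abs_sub_le_pVarNorm hp hf hs ht)
    (fun s hs t ht ↦ abs_sub_le_pVarNorm hq hg hs ht) hη
  refine ⟨δ, hδ, fun c d hcd hdc ↦ ?_⟩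
  have hball {s : ℝ} (hs : s ∈ Icc c d) : s ∈ Metric.ball c δ ∩ Icc a b := by
    refine ⟨?_, hcd hs⟩
    rw [Metric.mem_ball, Real.dist_eq, abs_of_nonneg (sub_nonneg.2 hs.1)]
    exact (sub_le_sub_right hs.2 c).trans_lt hdc
  convert youngBound_of_abs_mul_le hp hq hpq
    (ne_top_of_le_ne_top hf (pVar_le_pVar_of_subset f p hcd))
    (ne_top_of_le_ne_top hg (pVar_le_pVar_of_subset g q hcd)) hη.le
    (fun s hs t ht u hu v hv ↦ hδη c (hcd ⟨le_rfl, hs.1.trans hs.2⟩) s (hball hs) t (hball ht)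
      u (hball hu) v (hball hv)) using 2
  rw [Real.rpow_inv_rpow (by positivity) he.ne', mul_div_cancel₀ _ hC.ne']

/-! ### Riemann–Stieltjes sums -/

lemma sum_range_sum_Ico_of_monotone {M : Type*} [AddCommMonoid M] (F : ℕ → M) {κ : ℕ → ℕ}
    (hκ : Monotone κ) (n : ℕ) :
    ∑ i ∈ Finset.range n, ∑ j ∈ Finset.Ico (κ i) (κ (i + 1)), F j =
      ∑ j ∈ Finset.Ico (κ 0) (κ n), F j := by
  induction n with
  | zero => simp
  | succ n ih =>
    rw [Finset.sum_range_succ, ih, Finset.sum_Ico_consecutive F (hκ n.zero_le) (hκ n.le_succ)]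

lemma exists_monotone_enumeration {α : Type*} [LinearOrder α] {R : Finset α} (hR : R.Nonempty) :
    ∃ (r : ℕ → α) (κ : α → ℕ), Monotone r ∧ MonotoneOn κ R ∧ ∀ x ∈ R, r (κ x) = x := by
  obtain ⟨m, hm⟩ := Nat.exists_eq_succ_of_ne_zero hR.card_ne_zero
  have hsurj : ∀ x ∈ R, ∃ i, R.orderEmbOfFin hm i = x := fun x hx ↦ by
    rwa [← mem_range, Finset.range_orderEmbOfFin]
  choose! κ hκ using hsurj
  refine ⟨fun i ↦ R.orderEmbOfFin hm (Fin.clamp i m), fun x ↦ κ x,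
    (R.orderEmbOfFin hm).monotone.comp Fin.clamp_monotone, fun x hx y hy hxy ↦ ?_, fun x hx ↦ ?_⟩
  · rwa [Fin.val_fin_le, ← (R.orderEmbOfFin hm).le_iff_le, hκ x hx, hκ y hy]
  · change R.orderEmbOfFin hm (Fin.clamp (κ x) m) = x
    rw [show Fin.clamp (κ x) m = κ x from Fin.ext (min_eq_left (κ x).is_le), hκ x hx]

lemma YoungBound.abs_sum_Ico_sub_le {f g : ℝ → ℝ} {c d K : ℝ} (h : YoungBound f g c d K)
    {r : ℕ → ℝ} (hr : Monotone r) {k l : ℕ} (hk : r k = c) (hl : r l = d) (hkl : k ≤ l) :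
    |∑ j ∈ Finset.Ico k l, f (r j) * (g (r (j + 1)) - g (r j)) - f c * (g d - g c)| ≤ K := by
  have hmono : Monotone fun j ↦ r (k + j) := fun i j hij ↦ hr (by gcongr)
  have hend : r (k + (l - k)) = d := by rw [Nat.add_sub_cancel' hkl, hl]
  simpa only [Finset.sum_Ico_eq_sum_range, hend, add_assoc] using h.abs_sum_sub_le (m := l - k)
    hmono hmono hk hend.le hk.ge fun i hi ↦ hl ▸ hr (by omega)

/-- A tagged partition of `[a;b]` with division points `point 0 ≤ ⋯ ≤ point length` and tags
`tag i ∈ [point i; point (i + 1)]`. Points may repeat, and both sequences are continued past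
`length` by the constant `b`, so that they can be reindexed freely. -/
structure TaggedPartition (a b : ℝ) where
  length : ℕ
  point : ℕ → ℝ
  tag : ℕ → ℝ
  monotone_point : Monotone point
  point_zero : point 0 = a
  point_of_length_le : ∀ i, length ≤ i → point i = b
  tag_mem : ∀ i, tag i ∈ Icc (point i) (point (i + 1))

namespace TaggedPartition

variable {a b : ℝ}

/-- The Riemann–Stieltjes sum `∑ f(ξ_i) (g(t_{i+1}) - g(t_i))` of a tagged partition. -/
def rsSum (f g : ℝ → ℝ) (π : TaggedPartition a b) : ℝ :=
  ∑ i ∈ Finset.range π.length, f (π.tag i) * (g (π.point (i + 1)) - g (π.point i))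

/-- All intervals of the tagged partition are shorter than `δ`. -/
def MeshLT (π : TaggedPartition a b) (δ : ℝ) : Prop :=
  ∀ i, π.point (i + 1) - π.point i < δ

variable (a b) in
/-- The filter on tagged partitions of `[a;b]` describing the limit as the mesh tends to `0`. -/
def meshFilter : Filter (TaggedPartition a b) :=
  ⨅ δ > 0, 𝓟 {π | π.MeshLT δ}

variable (a b) in
lemma hasBasis_meshFilter : (meshFilter a b).HasBasis (0 < ·) fun δ ↦ {π | π.MeshLT δ} :=
  hasBasis_biInf_principal'
    (fun δ hδ δ' hδ' ↦ ⟨min δ δ', lt_min hδ hδ',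
      fun _ h i ↦ (h i).trans_le (min_le_left _ _), fun _ h i ↦ (h i).trans_le (min_le_right _ _)⟩)
    ⟨1, one_pos⟩

lemma point_length (π : TaggedPartition a b) : π.point π.length = b :=
  π.point_of_length_le _ le_rfl

lemma monotone_tag (π : TaggedPartition a b) : Monotone π.tag :=
  monotone_nat_of_le_succ fun i ↦ (π.tag_mem i).2.trans (π.tag_mem (i + 1)).1

lemma Icc_point_subset (π : TaggedPartition a b) (i : ℕ) :
    Icc (π.point i) (π.point (i + 1)) ⊆ Icc a b :=
  Icc_subset_Icc (π.point_zero.ge.trans (π.monotone_point i.zero_le)) <|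
    (π.monotone_point (le_max_right π.length (i + 1))).trans
      (π.point_of_length_le _ (le_max_left _ _)).le

lemma neBot_meshFilter (hab : a ≤ b) : (meshFilter a b).NeBot := by
  refine (hasBasis_meshFilter a b).neBot_iff.2 fun {δ} hδ ↦ ?_
  obtain ⟨m, hm⟩ := Icc.addNSMul_eq_right hab (half_pos hδ)
  have hmono := Icc.monotone_addNSMul hab (half_pos hδ).le
  refine ⟨⟨m, fun i ↦ Icc.addNSMul hab (δ / 2) i, fun i ↦ Icc.addNSMul hab (δ / 2) i, hmono,
    Icc.addNSMul_zero hab, hm, fun i ↦ ⟨le_rfl, hmono i.le_succ⟩⟩, fun i ↦ ?_⟩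
  calc (Icc.addNSMul hab (δ / 2) (i + 1) : ℝ) - Icc.addNSMul hab (δ / 2) i
      ≤ |(Icc.addNSMul hab (δ / 2) (i + 1) : ℝ) - Icc.addNSMul hab (δ / 2) i| := le_abs_self _
    _ ≤ δ / 2 := Icc.abs_sub_addNSMul_le hab (half_pos hδ).le i ⟨hmono i.le_succ, le_rfl⟩
    _ < δ := half_lt_self hδ

/-- The tagged partition given by finite sequences, extended by clamping the indices. -/
def ofFin {n : ℕ} {t : Fin (n + 1) → ℝ} {ξ : Fin n → ℝ} (ht : Monotone t) (h0 : t 0 = a)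
    (hn : t (Fin.last n) = b) (hξ : ∀ i, ξ i ∈ Icc (t i.castSucc) (t i.succ)) :
    TaggedPartition a b where
  length := n
  point i := t (Fin.clamp i n)
  tag i := if h : i < n then ξ ⟨i, h⟩ else b
  monotone_point := ht.comp Fin.clamp_monotone
  point_zero := h0
  point_of_length_le i hi := by rw [Fin.clamp_eq_last i n hi, hn]
  tag_mem i := by
    split_ifs with hi
    · rw [clamp_val ⟨i, hi⟩, clamp_val_add_one ⟨i, hi⟩]
      exact hξ ⟨i, hi⟩
    · rw [Fin.clamp_eq_last i n (not_lt.1 hi), Fin.clamp_eq_last (i + 1) n (by omega), hn]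
      exact ⟨le_rfl, le_rfl⟩

section

variable {n : ℕ} {t : Fin (n + 1) → ℝ} {ξ : Fin n → ℝ} (ht : Monotone t) (h0 : t 0 = a)
  (hn : t (Fin.last n) = b) (hξ : ∀ i, ξ i ∈ Icc (t i.castSucc) (t i.succ))

lemma rsSum_ofFin (f g : ℝ → ℝ) :
    (ofFin ht h0 hn hξ).rsSum f g = ∑ i, f (ξ i) * (g (t i.succ) - g (t i.castSucc)) := by
  refine (Finset.sum_range (n := n) _).trans (Finset.sum_congr rfl fun i _ ↦ ?_)
  simp only [ofFin, dif_pos i.2, clamp_val, clamp_val_add_one]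

lemma MeshLT.ofFin {δ : ℝ} (hδ : 0 < δ) (h : ∀ i : Fin n, t i.succ - t i.castSucc < δ) :
    (ofFin ht h0 hn hξ).MeshLT δ := by
  intro i
  rcases lt_or_ge i n with hi | hi
  · simpa only [TaggedPartition.ofFin, clamp_val ⟨i, hi⟩, clamp_val_add_one ⟨i, hi⟩]
      using h ⟨i, hi⟩
  · rwa [point_of_length_le _ i hi, point_of_length_le _ (i + 1) (hi.trans i.le_succ), sub_self]

end

lemma abs_tag_mul_sub_le (π : TaggedPartition a b) {f g : ℝ → ℝ} {i : ℕ} {K : ℝ}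
    (h : YoungBound f g (π.point i) (π.point (i + 1)) K) :
    |f (π.tag i) * (g (π.point (i + 1)) - g (π.point i)) -
      f (π.point i) * (g (π.point (i + 1)) - g (π.point i))| ≤ K := by
  simpa using h.abs_sum_sub_le (m := 1) (ξ := fun j ↦ π.tag (i + j)) (t := fun j ↦ π.point (i + j))
    (fun _ _ hjk ↦ π.monotone_tag (by gcongr)) (fun _ _ hjk ↦ π.monotone_point (by gcongr))
    rfl le_rfl (π.tag_mem i).1 (by simpa using (π.tag_mem i).2)

lemma abs_rsSum_sub_sum_Ico_le (π : TaggedPartition a b) {f g : ℝ → ℝ} {K : ℕ → ℝ}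
    (hK : ∀ i, YoungBound f g (π.point i) (π.point (i + 1)) (K i)) {r : ℕ → ℝ} (hr : Monotone r)
    {κ : ℕ → ℕ} (hκ : Monotone κ) (hrκ : ∀ i, r (κ i) = π.point i) :
    |π.rsSum f g - ∑ j ∈ Finset.Ico (κ 0) (κ π.length), f (r j) * (g (r (j + 1)) - g (r j))| ≤
      2 * ∑ i ∈ Finset.range π.length, K i := by
  rw [rsSum, ← sum_range_sum_Ico_of_monotone _ hκ, ← Finset.sum_sub_distrib, Finset.mul_sum]
  refine (Finset.abs_sum_le_sum_abs _ _).trans (Finset.sum_le_sum fun i _ ↦ ?_)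
  have hrefine := (hK i).abs_sum_Ico_sub_le hr (hrκ i) (hrκ (i + 1)) (hκ i.le_succ)
  rw [abs_sub_comm] at hrefine
  rw [two_mul]
  exact (abs_sub_le _ _ _).trans (add_le_add (π.abs_tag_mul_sub_le (hK i)) hrefine)

lemma abs_rsSum_sub_le (π : TaggedPartition a b) {f g : ℝ → ℝ} {K : ℝ}
    (h : YoungBound f g a b K) : |π.rsSum f g - f a * (g b - g a)| ≤ K := by
  simpa only [rsSum, π.point_length] using
    h.abs_sum_sub_le π.monotone_tag π.monotone_point π.point_zero π.point_length.le
    (π.point_zero.ge.trans (π.tag_mem 0).1)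
    fun i _ ↦ (π.Icc_point_subset i (π.tag_mem i)).2

/-- The finite set of division points of a tagged partition. -/
noncomputable def points (π : TaggedPartition a b) : Finset ℝ :=
  (Finset.range (π.length + 1)).image π.point

lemma point_mem_points (π : TaggedPartition a b) (i : ℕ) : π.point i ∈ π.points := by
  rcases le_or_gt i π.length with hi | hi
  · exact Finset.mem_image_of_mem _ (Finset.mem_range_succ_iff.2 hi)
  · rw [(π.point_of_length_le i hi.le).trans π.point_length.symm]
    exact Finset.mem_image_of_mem _ (Finset.self_mem_range_succ _)

lemma abs_rsSum_sub_rsSum_le (π π' : TaggedPartition a b) {f g : ℝ → ℝ} {K K' : ℕ → ℝ}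
    (hK : ∀ i, YoungBound f g (π.point i) (π.point (i + 1)) (K i))
    (hK' : ∀ i, YoungBound f g (π'.point i) (π'.point (i + 1)) (K' i)) :
    |π.rsSum f g - π'.rsSum f g| ≤
      2 * ∑ i ∈ Finset.range π.length, K i + 2 * ∑ i ∈ Finset.range π'.length, K' i := by
  obtain ⟨r, κ, hr, hκ, hrκ⟩ := exists_monotone_enumeration
    (R := π.points ∪ π'.points) ⟨_, Finset.mem_union_left _ (π.point_mem_points 0)⟩
  have hπ (i) : π.point i ∈ π.points ∪ π'.points :=
    Finset.mem_union_left _ (π.point_mem_points i)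
  have hπ' (i) : π'.point i ∈ π.points ∪ π'.points :=
    Finset.mem_union_right _ (π'.point_mem_points i)
  have h := π.abs_rsSum_sub_sum_Ico_le hK hr (κ := fun i ↦ κ (π.point i))
    (fun i j hij ↦ hκ (hπ i) (hπ j) (π.monotone_point hij)) fun i ↦ hrκ _ (hπ i)
  have h' := π'.abs_rsSum_sub_sum_Ico_le hK' hr (κ := fun i ↦ κ (π'.point i))
    (fun i j hij ↦ hκ (hπ' i) (hπ' j) (π'.monotone_point hij)) fun i ↦ hrκ _ (hπ' i)
  rw [point_zero, point_length] at h h'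
  rw [abs_sub_comm] at h'
  exact (abs_sub_le _ _ _).trans (add_le_add h h')

lemma sum_toReal_pVar_point_le (π : TaggedPartition a b) {f : ℝ → ℝ} {p : ℝ} (hp : p ≠ 0)
    (hf : pVar f p a b ≠ ⊤) :
    ∑ i ∈ Finset.range π.length, (pVar f p (π.point i) (π.point (i + 1))).toReal ≤
      (pVar f p a b).toReal := by
  have h := sum_toReal_pVar_le (n := π.length) (f := f) hp π.monotone_point
  rw [π.point_zero, π.point_length] at h
  exact h hf

lemma cauchy_map_rsSum {p q : ℝ} (hp : 0 < p) (hq : 0 < q) (hpq : 1 < 1 / p + 1 / q)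
    (hab : a ≤ b) {f g : ℝ → ℝ} (h : NoCommonDiscont f g a b) (hf : pVar f p a b ≠ ⊤)
    (hg : pVar g q a b ≠ ⊤) : Cauchy ((meshFilter a b).map (rsSum f g)) := by
  have := neBot_meshFilter hab
  refine Metric.cauchy_iff.2 ⟨inferInstance, fun ε hε ↦ ?_⟩
  obtain ⟨c, hc, hcε⟩ := exists_pos_mul_lt hε (4 * ((pVar f p a b).toReal + (pVar g q a b).toReal))
  obtain ⟨δ, hδ, hδc⟩ := exists_youngBound_of_noCommonDiscont hp hq hpq h hf hg hc
  have hblocks (π : TaggedPartition a b) : ∑ i ∈ Finset.range π.length,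
      c * ((pVar f p (π.point i) (π.point (i + 1))).toReal +
        (pVar g q (π.point i) (π.point (i + 1))).toReal) ≤
      c * ((pVar f p a b).toReal + (pVar g q a b).toReal) := by
    rw [← Finset.mul_sum, Finset.sum_add_distrib]
    gcongr
    exacts [π.sum_toReal_pVar_point_le hp.ne' hf, π.sum_toReal_pVar_point_le hq.ne' hg]
  refine ⟨rsSum f g '' {π | π.MeshLT δ},
    image_mem_map ((hasBasis_meshFilter a b).mem_of_mem hδ), ?_⟩
  rintro _ ⟨π, hπ, rfl⟩ _ ⟨π', hπ', rfl⟩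
  rw [Real.dist_eq]
  linarith [π.abs_rsSum_sub_rsSum_le π' (fun i ↦ hδc _ _ (π.Icc_point_subset i) (hπ i))
    (fun i ↦ hδc _ _ (π'.Icc_point_subset i) (hπ' i)), hblocks π, hblocks π']

end TaggedPartition

open TaggedPartition in
lemma rsIntegral_of_tendsto {f g : ℝ → ℝ} {a b I : ℝ}
    (h : Tendsto (rsSum f g) (meshFilter a b) (nhds I)) : RSIntegral f g a b I := by
  intro ε hε
  obtain ⟨δ, hδ, hδI⟩ := ((hasBasis_meshFilter a b).tendsto_iff Metric.nhds_basis_ball).1 h ε hε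
  refine ⟨δ, hδ, fun n t ξ ht h0 hn hξ hmesh ↦ ?_⟩
  rw [← Real.dist_eq, ← rsSum_ofFin ht.monotone h0 hn hξ]
  exact hδI _ (MeshLT.ofFin ht.monotone h0 hn hξ hδ hmesh)

theorem improved_loeve_young'_general {p q : ℝ} (hp : 1 < p) (hq : 0 < q) (hpq : 1 < 1 / p + 1 / q)
    {a b : ℝ} (hab : a ≤ b) {f g : ℝ → ℝ} (h : NoCommonDiscont f g a b) (hf : pVar f p a b ≠ ⊤)
    (hg : pVar g q a b ≠ ⊤) :
    ∃ I : ℝ, RSIntegral f g a b I ∧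
      |I - f a * (g b - g a)| ≤
        2 * (1 / (1 - 1 / p) + 1 / (1 / p + 1 / q - 1)) * pVarNorm f p a b *
          pVarNorm g q a b ^ (q - q / p) * oscNorm g a b ^ (1 + q / p - q) := by
  have := TaggedPartition.neBot_meshFilter hab
  obtain ⟨I, hI⟩ := cauchy_map_iff_exists_tendsto.1
    (TaggedPartition.cauchy_map_rsSum (zero_lt_one.trans hp) hq hpq hab h hf hg)
  exact ⟨I, rsIntegral_of_tendsto hI, le_of_tendsto (hI.sub_const _).abs
    (Eventually.of_forall fun π ↦ π.abs_rsSum_sub_le (youngBound_of_pVar hp hq hpq hf hg))⟩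

/-- Remark 4: symmetric version of the improved Loéve–Young inequality. -/
theorem improved_loeve_young'
    (p q : ℝ) (hp : 1 < p) (hq : 1 < q) (hpq : 1 / p + 1 / q > 1) :
    ∃ C : ℝ, 0 < C ∧ ∀ (a b : ℝ), a < b → ∀ f g : ℝ → ℝ,
      NoCommonDiscont f g a b → pVar f p a b < ⊤ → pVar g q a b < ⊤ →
      ∃ I : ℝ, RSIntegral f g a b I ∧
        |I - f a * (g b - g a)| ≤
          C * pVarNorm f p a b * pVarNorm g q a b ^ (q - q / p) *
            oscNorm g a b ^ (1 + q / p - q) := by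
  have hp' : 0 < 1 - 1 / p := sub_pos.2 ((div_lt_one (zero_lt_one.trans hp)).2 hp)
  have hpq' : 0 < 1 / p + 1 / q - 1 := sub_pos.2 hpq
  exact ⟨2 * (1 / (1 - 1 / p) + 1 / (1 / p + 1 / q - 1)), by positivity,
    fun a b hab f g h hf hg ↦ improved_loeve_young'_general hp (zero_lt_one.trans hq) hpq hab.le h
      hf.ne hg.ne⟩
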